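/- arXiv:1605.00863 — 2 statements merged into one kernel-verified Lean document; each statement's English description precedes it below -/
import Mathlib

section
/- Let T be a [3,2]-transversal design, let B be a block of T, and let x_1, x_2, x_3 be any 3 distinct nodes of T. Then there are 3 pairwise internally-disjoint paths in T from B to x_1, x_2 and x_3 (one path to each node). Moreover, if the 3 nodes lie in 3 different groups then each path has length at most 5, whereas if the 3 nodes lie in only 2 different groups then each path has length at most 3. -/
/-- The bipartite graph on `ν ⊕ β` (nodes on the left, blocks on the right)
determined by the adjacency relation `adj`. -/
def bipGraph {ν β : Type} (adj : ν → β → Prop) : SimpleGraph (ν ⊕ β) :=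
  SimpleGraph.fromRel fun u v => ∃ x b, u = Sum.inl x ∧ v = Sum.inr b ∧ adj x b

/-- A `[Δ,k]`-transversal design: the nodes form a set of size `Δ * k` partitioned
into `Δ` groups (the fibres of `group`), each of size `k`; there are `k ^ 2` blocks;
every block is adjacent to exactly one node of each group; and every pair of nodes
lying in distinct groups is adjacent to exactly one common block (the block
*generated* by the pair). -/
structure IsTransversalDesign {ν β : Type} (Δ k : ℕ)
    (group : ν → Fin Δ) (adj : ν → β → Prop) : Prop where
  two_le_k : 2 ≤ k
  two_le_Δ : 2 ≤ Δ
  groupCard : ∀ i : Fin Δ, Nat.card {x : ν // group x = i} = k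
  blockCard : Nat.card β = k ^ 2
  blockMeets : ∀ (b : β) (i : Fin Δ), ∃! x : ν, group x = i ∧ adj x b
  pairGen : ∀ x y : ν, group x ≠ group y → ∃! b : β, adj x b ∧ adj y b

/-- A family of walks (with sources `s i` and destinations `t i`) is pairwise
internally-disjoint if every vertex which is a source or destination of some member
of the family appears on members of the family only as their source or destination,
and every vertex which is not a source or destination of any member of the family
lies on at most one member of the family. -/
def PairwiseInternallyDisjoint {V ι : Type} {G : SimpleGraph V} {s t : ι → V}
    (p : (i : ι) → G.Walk (s i) (t i)) : Prop :=
  (∀ i j : ι, ∀ v : V, v ∈ (p i).support → (v = s j ∨ v = t j) → v = s i ∨ v = t i) ∧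
  (∀ i j : ι, ∀ v : V, (∀ l : ι, v ≠ s l ∧ v ≠ t l) →
    v ∈ (p i).support → v ∈ (p j).support → i = j)

/-- A family of walks is pairwise edge-disjoint if every edge lies on at most one
member of the family. -/
def PairwiseEdgeDisjoint {V ι : Type} {G : SimpleGraph V} {s t : ι → V}
    (p : (i : ι) → G.Walk (s i) (t i)) : Prop :=
  ∀ i j : ι, ∀ e : Sym2 V, e ∈ (p i).edges → e ∈ (p j).edges → i = j

/-!
Let `b` be a block of a `[Δ,2]`-transversal design.  Two nodes on `b` share no further block, and
each group has only one node off `b`, so a second block `c` through a node `a` on `b` contains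
every node off `b` outside the group of `a`.  A node `z` off `b` is therefore joined to `b` by a
path `b, a, c, z` through any node `a` on `b` outside its group, while a node on `b` is a neighbour
of `b`.  Paths of this kind with distinct targets and distinct first nodes meet only in `b`, and
Hall's theorem supplies the distinct first nodes unless all targets but one lie on `b` and none of
these is in the group of the remaining target `z`.  In that case `z` is reached by a path of
length `5` whose only node on `b` belongs to the group of `z`.
-/

open Function SimpleGraph

lemma bipGraph_adj_inl_inr {ν β : Type} {adj : ν → β → Prop} {x : ν} {b : β} :
    (bipGraph adj).Adj (Sum.inl x) (Sum.inr b) ↔ adj x b := by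
  simp [bipGraph, SimpleGraph.fromRel_adj]

lemma bipGraph_adj_inr_inl {ν β : Type} {adj : ν → β → Prop} {x : ν} {b : β} :
    (bipGraph adj).Adj (Sum.inr b) (Sum.inl x) ↔ adj x b := by
  rw [SimpleGraph.adj_comm, bipGraph_adj_inl_inr]

lemma pairwiseInternallyDisjoint_of_common_source {V ι : Type} {G : SimpleGraph V} {s : V}
    {t : ι → V} (p : (i : ι) → G.Walk s (t i))
    (h : Pairwise fun i j => ∀ v ∈ (p i).support, v ∈ (p j).support → v = s) :
    PairwiseInternallyDisjoint (s := fun _ => s) p := by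
  refine ⟨fun i j v hvi hv => ?_, fun i j v hv hvi hvj => ?_⟩
  · obtain rfl | hij := eq_or_ne i j
    · exact hv
    · refine Or.inl (hv.elim id ?_)
      rintro rfl
      exact h hij _ hvi (p j).end_mem_support
  · by_contra hij
    exact (hv i).1 (h hij v hvi hvj)

lemma card_le_card_of_compl_singleton_subset {κ ι : Type*} [Fintype κ] [Fintype ι]
    [DecidableEq ι] (hcard : Fintype.card κ ≤ Fintype.card ι) {s : Finset κ} {t : Finset ι} {a : ι}
    (ht : {a}ᶜ ⊆ t) (ha : s = Finset.univ → a ∈ t) : s.card ≤ t.card := by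
  by_cases hs : s = Finset.univ
  · have t_eq : t = Finset.univ := by
      refine Finset.eq_univ_of_forall fun i => ?_
      obtain rfl | hi := eq_or_ne i a
      · exact ha hs
      · exact ht (by simpa using hi)
    rw [t_eq]
    exact s.card_le_univ.trans hcard
  · have card_lt : s.card < Fintype.card κ := (Finset.card_lt_iff_ne_univ s).2 hs
    calc s.card ≤ Fintype.card κ - 1 := Nat.le_sub_one_of_lt card_lt
      _ ≤ Fintype.card ι - 1 := Nat.sub_le_sub_right hcard 1
      _ = ({a}ᶜ : Finset ι).card := by rw [Finset.card_compl, Finset.card_singleton]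
      _ ≤ t.card := Finset.card_le_card ht

lemma exists_injective_eq_iff {κ ι : Type*} [Finite κ] [Finite ι]
    (hcard : Nat.card κ ≤ Nat.card ι) (g : κ → ι) (P : κ → Prop)
    (hP : Set.InjOn g {l | P l}) (hnP : Set.InjOn g {l | ¬ P l})
    (h : ∀ l, ¬ P l → ∃ m ≠ l, ¬ P m ∨ g m = g l) :
    ∃ σ : κ → ι, Injective σ ∧ ∀ l, g l = σ l ↔ P l := by
  classical
  have := Fintype.ofFinite κ
  have := Fintype.ofFinite ι
  rw [Nat.card_eq_fintype_card, Nat.card_eq_fintype_card] at hcard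
  let allowed (l : κ) : Finset ι := if P l then {g l} else {g l}ᶜ
  have mem_allowed (l : κ) (i : ι) : i ∈ allowed l ↔ (g l = i ↔ P l) := by
    by_cases hl : P l <;> simp [allowed, hl, eq_comm]
  suffices hall : ∀ s : Finset κ, s.card ≤ (s.biUnion allowed).card by
    obtain ⟨σ, hσ, hmem⟩ := (Finset.all_card_le_biUnion_card_iff_exists_injective allowed).1 hall
    exact ⟨σ, hσ, fun l => (mem_allowed l (σ l)).1 (hmem l)⟩
  intro s
  by_cases hs : ∀ l ∈ s, P l
  · rw [← Finset.card_image_of_injOn (hP.mono hs)]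
    refine Finset.card_le_card (Finset.image_subset_iff.2 fun l hl => ?_)
    exact Finset.mem_biUnion.2 ⟨l, hl, (mem_allowed l _).2 (by simp [hs l hl])⟩
  push Not at hs
  obtain ⟨l, hls, hl⟩ := hs
  obtain ⟨m, hml, hm⟩ := h l hl
  have mem_allowed_m : g l ∈ allowed m := by
    rw [mem_allowed]
    by_cases hPm : P m
    · simpa [hPm] using hm
    · simpa [hPm] using hnP.ne hPm hl hml
  refine card_le_card_of_compl_singleton_subset hcard (a := g l) (fun i hi => ?_) fun hs => ?_
  · exact Finset.mem_biUnion.2 ⟨l, hls, by simpa [allowed, hl] using hi⟩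
  · exact Finset.mem_biUnion.2 ⟨m, hs ▸ Finset.mem_univ m, mem_allowed_m⟩

namespace IsTransversalDesign

section

variable {ν β : Type} {Δ k : ℕ} {group : ν → Fin Δ} {adj : ν → β → Prop}

lemma node_eq (hT : IsTransversalDesign Δ k group adj) {y z : ν} {b : β}
    (h : group y = group z) (hy : adj y b) (hz : adj z b) : y = z :=
  (hT.blockMeets b (group z)).unique ⟨h, hy⟩ ⟨rfl, hz⟩

lemma block_eq (hT : IsTransversalDesign Δ k group adj) {y z : ν} {b c : β}
    (h : group y ≠ group z) (hyb : adj y b) (hzb : adj z b) (hyc : adj y c) (hzc : adj z c) :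
    b = c :=
  (hT.pairGen y z h).unique ⟨hyb, hzb⟩ ⟨hyc, hzc⟩

lemma exists_group_ne (hT : IsTransversalDesign Δ k group adj) (i : Fin Δ) : ∃ j, j ≠ i :=
  have := Fin.nontrivial_iff_two_le.2 hT.two_le_Δ
  exists_ne i

lemma exists_not_adj (hT : IsTransversalDesign Δ k group adj) (b : β) (i : Fin Δ) :
    ∃ z, group z = i ∧ ¬ adj z b := by
  by_contra! h
  have : Subsingleton {z : ν // group z = i} :=
    ⟨fun y z => Subtype.ext <| hT.node_eq (y.2.trans z.2.symm) (h y y.2) (h z z.2)⟩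
  have card_le_one : Nat.card {z : ν // group z = i} ≤ 1 :=
    Finite.card_le_one_iff_subsingleton.2 this
  have := hT.groupCard i
  have := hT.two_le_k
  omega

lemma exists_adj_ne (hT : IsTransversalDesign Δ k group adj) (y : ν) (b : β) :
    ∃ c, adj y c ∧ c ≠ b := by
  obtain ⟨j, hj⟩ := hT.exists_group_ne (group y)
  obtain ⟨z, rfl, hzb⟩ := hT.exists_not_adj b j
  obtain ⟨c, ⟨hyc, hzc⟩, -⟩ := hT.pairGen y z hj.symm
  exact ⟨c, hyc, fun h => hzb (h ▸ hzc)⟩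

/-- The unique node of group `i` on the block `b`. -/
noncomputable def nodeOn (hT : IsTransversalDesign Δ k group adj) (b : β) (i : Fin Δ) : ν :=
  (hT.blockMeets b i).choose

lemma group_nodeOn (hT : IsTransversalDesign Δ k group adj) (b : β) (i : Fin Δ) :
    group (hT.nodeOn b i) = i :=
  (hT.blockMeets b i).choose_spec.1.1

lemma adj_nodeOn (hT : IsTransversalDesign Δ k group adj) (b : β) (i : Fin Δ) :
    adj (hT.nodeOn b i) b :=
  (hT.blockMeets b i).choose_spec.1.2

lemma nodeOn_injective (hT : IsTransversalDesign Δ k group adj) (b : β) :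
    Injective (hT.nodeOn b) :=
  LeftInverse.injective (hT.group_nodeOn b)

lemma eq_nodeOn (hT : IsTransversalDesign Δ k group adj) {z : ν} {b : β} (h : adj z b) :
    z = hT.nodeOn b (group z) :=
  hT.node_eq (hT.group_nodeOn b _).symm h (hT.adj_nodeOn b _)

/-- A block other than `b` through the node of group `i` on `b`, along which a path from `b`
leaves that node.  It is a choice; for `k = 2` there is only one such block. -/
noncomputable def blockVia (hT : IsTransversalDesign Δ k group adj) (b : β) (i : Fin Δ) : β :=
  (hT.exists_adj_ne (hT.nodeOn b i) b).choose

lemma nodeOn_adj_blockVia (hT : IsTransversalDesign Δ k group adj) (b : β) (i : Fin Δ) :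
    adj (hT.nodeOn b i) (hT.blockVia b i) :=
  (hT.exists_adj_ne (hT.nodeOn b i) b).choose_spec.1

lemma blockVia_ne (hT : IsTransversalDesign Δ k group adj) (b : β) (i : Fin Δ) :
    hT.blockVia b i ≠ b :=
  (hT.exists_adj_ne (hT.nodeOn b i) b).choose_spec.2

lemma blockVia_injective (hT : IsTransversalDesign Δ k group adj) (b : β) :
    Injective (hT.blockVia b) := by
  intro i j h
  by_contra hij
  refine hT.blockVia_ne b i (hT.block_eq (y := hT.nodeOn b i) (z := hT.nodeOn b j) ?_
    (hT.nodeOn_adj_blockVia b i) (h ▸ hT.nodeOn_adj_blockVia b j)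
    (hT.adj_nodeOn b i) (hT.adj_nodeOn b j))
  rwa [hT.group_nodeOn, hT.group_nodeOn]

end

section

variable {ν β : Type} {Δ : ℕ} {group : ν → Fin Δ} {adj : ν → β → Prop}

lemma eq_of_not_adj (hT : IsTransversalDesign Δ 2 group adj) {y z : ν} {b : β}
    (h : group y = group z) (hy : ¬ adj y b) (hz : ¬ adj z b) : y = z := by
  let a : {w : ν // group w = group z} := ⟨hT.nodeOn b (group z), hT.group_nodeOn b _⟩
  have ne_a (w : {w : ν // group w = group z}) (hw : ¬ adj w b) : w ≠ a :=
    fun hwa => hw (hwa ▸ hT.adj_nodeOn b _)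
  have exists_unique_ne := (Nat.card_eq_two_iff' a).1 (hT.groupCard (group z))
  exact congrArg Subtype.val (exists_unique_ne.unique (ne_a ⟨y, h⟩ hy) (ne_a ⟨z, rfl⟩ hz))

lemma adj_blockVia (hT : IsTransversalDesign Δ 2 group adj) {z : ν} {b : β} {i : Fin Δ}
    (hz : ¬ adj z b) (hi : group z ≠ i) : adj z (hT.blockVia b i) := by
  let y := hT.nodeOn (hT.blockVia b i) (group z)
  have hgroup : group y = group z := hT.group_nodeOn _ _
  have hyvia : adj y (hT.blockVia b i) := hT.adj_nodeOn _ _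
  have hyb : ¬ adj y b := fun hyb =>
    hT.blockVia_ne b i <| hT.block_eq (y := y) (z := hT.nodeOn b i)
      (by rwa [hgroup, hT.group_nodeOn]) hyvia (hT.nodeOn_adj_blockVia b i) hyb (hT.adj_nodeOn b i)
  exact hT.eq_of_not_adj hgroup hyb hz ▸ hyvia

lemma exists_path_length_le_three (hT : IsTransversalDesign Δ 2 group adj) {z : ν} {b : β}
    {i : Fin Δ} (h : group z = i ↔ adj z b) :
    ∃ p : (bipGraph adj).Walk (Sum.inr b) (Sum.inl z), p.IsPath ∧ p.length ≤ 3 ∧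
      p.support ⊆ [Sum.inr b, Sum.inl (hT.nodeOn b i), Sum.inr (hT.blockVia b i), Sum.inl z] := by
  by_cases hz : adj z b
  · exact ⟨.cons (bipGraph_adj_inr_inl.2 hz) .nil, by simp, by simp, by simp⟩
  have hi : group z ≠ i := mt h.1 hz
  have nodeOn_ne : hT.nodeOn b i ≠ z := fun e => hz (e ▸ hT.adj_nodeOn b i)
  refine ⟨.cons (bipGraph_adj_inr_inl.2 (hT.adj_nodeOn b i)) <|
    .cons (bipGraph_adj_inl_inr.2 (hT.nodeOn_adj_blockVia b i)) <|
    .cons (bipGraph_adj_inr_inl.2 (hT.adj_blockVia hz hi)) .nil, ?_, by simp, by simp⟩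
  simp [(hT.blockVia_ne b i).symm, nodeOn_ne]

lemma exists_path_length_le_five (hT : IsTransversalDesign Δ 2 group adj) {z : ν} {b : β}
    (hz : ¬ adj z b) :
    ∃ p : (bipGraph adj).Walk (Sum.inr b) (Sum.inl z), p.IsPath ∧ p.length ≤ 5 ∧
      ∀ y, Sum.inl y ∈ p.support → adj y b → group y = group z := by
  obtain ⟨j, hj⟩ := hT.exists_group_ne (group z)
  obtain ⟨w, rfl, hw⟩ := hT.exists_not_adj b j
  obtain ⟨d, ⟨hwd, hzd⟩, -⟩ := hT.pairGen w z hj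
  have nodeOn_ne {y : ν} (hy : ¬ adj y b) : hT.nodeOn b (group z) ≠ y :=
    fun e => hy (e ▸ hT.adj_nodeOn b _)
  have ne_d : b ≠ d := fun e => hz (e ▸ hzd)
  have blockVia_ne_d : hT.blockVia b (group z) ≠ d := fun e =>
    nodeOn_ne hz (hT.node_eq (hT.group_nodeOn b _) (e ▸ hT.nodeOn_adj_blockVia b _) hzd)
  have w_ne : w ≠ z := fun e => hj (e ▸ rfl)
  refine ⟨.cons (bipGraph_adj_inr_inl.2 (hT.adj_nodeOn b (group z))) <|
    .cons (bipGraph_adj_inl_inr.2 (hT.nodeOn_adj_blockVia b (group z))) <|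
    .cons (bipGraph_adj_inr_inl.2 (hT.adj_blockVia hw hj)) <|
    .cons (bipGraph_adj_inl_inr.2 hwd) <|
    .cons (bipGraph_adj_inr_inl.2 hzd) .nil, ?_, by simp, fun y hy hyb => ?_⟩
  · simp [(hT.blockVia_ne b _).symm, nodeOn_ne hz, nodeOn_ne hw, ne_d, blockVia_ne_d, w_ne]
  · obtain rfl | rfl | rfl : y = hT.nodeOn b (group z) ∨ y = w ∨ y = z := by simpa using hy
    · exact hT.group_nodeOn b _
    · exact absurd hyb hw
    · rfl

variable {ι : Type}

lemma exists_fan_length_le_three (hT : IsTransversalDesign Δ 2 group adj) {b : β}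
    {x : ι → ν} (hx : Injective x) {σ : ι → Fin Δ} (hσ : Injective σ)
    (hσx : ∀ l, group (x l) = σ l ↔ adj (x l) b) :
    ∃ p : (l : ι) → (bipGraph adj).Walk (Sum.inr b) (Sum.inl (x l)),
      (∀ l, (p l).IsPath) ∧ PairwiseInternallyDisjoint p ∧ ∀ l, (p l).length ≤ 3 := by
  choose p hpath hlength hsupport using fun l => hT.exists_path_length_le_three (hσx l)
  have nodeOn_ne {l m : ι} (hlm : l ≠ m) : hT.nodeOn b (σ l) ≠ x m := fun e =>
    have adj_m : adj (x m) b := e ▸ hT.adj_nodeOn b (σ l)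
    hσ.ne hlm <| (hT.group_nodeOn b (σ l)).symm.trans ((congrArg group e).trans ((hσx m).2 adj_m))
  refine ⟨p, hpath, pairwiseInternallyDisjoint_of_common_source p fun l m hlm v hvl hvm => ?_,
    hlength⟩
  have hl := hsupport l hvl
  have hm := hsupport m hvm
  simp only [List.mem_cons, List.not_mem_nil, or_false] at hl hm
  obtain rfl | rfl | rfl | rfl := hl
  · rfl
  · simp [(hT.nodeOn_injective b).eq_iff, hσ.ne hlm, nodeOn_ne hlm] at hm
  · simpa [(hT.blockVia_injective b).eq_iff, hσ.ne hlm] using hm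
  · simp [(nodeOn_ne hlm.symm).symm, hx.ne hlm] at hm

lemma exists_fan_length_le_five (hT : IsTransversalDesign Δ 2 group adj) {b : β}
    {x : ι → ν} (hx : Injective fun l => group (x l)) {l : ι} (hl : ¬ adj (x l) b)
    (hadj : ∀ m ≠ l, adj (x m) b) :
    ∃ p : (l : ι) → (bipGraph adj).Walk (Sum.inr b) (Sum.inl (x l)),
      (∀ l, (p l).IsPath) ∧ PairwiseInternallyDisjoint p ∧ ∀ l, (p l).length ≤ 5 := by
  have exists_path (m : ι) : ∃ p : (bipGraph adj).Walk (Sum.inr b) (Sum.inl (x m)),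
      p.IsPath ∧ p.length ≤ 5 ∧ (m ≠ l → p.support = [Sum.inr b, Sum.inl (x m)]) ∧
      ∀ y, Sum.inl y ∈ p.support → adj y b → group y = group (x m) := by
    obtain rfl | hm := eq_or_ne m l
    · obtain ⟨p, hpath, hlength, hgroup⟩ := hT.exists_path_length_le_five hl
      exact ⟨p, hpath, hlength, fun h => absurd rfl h, hgroup⟩
    · exact ⟨.cons (bipGraph_adj_inr_inl.2 (hadj m hm)) .nil, by simp, by simp, by simp,
        fun y hy _ => by simp_all⟩
  choose p hpath hlength hsupport hgroup using exists_path
  have eq_source {m n : ι} (hmn : m ≠ n) (hm : m ≠ l) (v : ν ⊕ β) (hvm : v ∈ (p m).support)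
      (hvn : v ∈ (p n).support) : v = Sum.inr b := by
    obtain rfl | rfl : v = Sum.inr b ∨ v = Sum.inl (x m) := by simpa [hsupport m hm] using hvm
    · rfl
    · exact absurd (hgroup n _ hvn (hadj m hm)) (hx.ne hmn)
  refine ⟨p, hpath, pairwiseInternallyDisjoint_of_common_source p fun m n hmn v hvm hvn => ?_,
    hlength⟩
  obtain rfl | hm := eq_or_ne m l
  · exact eq_source hmn.symm hmn.symm v hvn hvm
  · exact eq_source hmn hm v hvm hvn

end

end IsTransversalDesign

theorem transversalDesign_three_two_fan_general {ν β ι : Type} [Finite ι] {Δ : ℕ}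
    (group : ν → Fin Δ) (adj : ν → β → Prop)
    (hT : IsTransversalDesign Δ 2 group adj) (hι : Nat.card ι ≤ Δ)
    (B : β) (x : ι → ν) (hx : Injective x) :
    ∃ p : (l : ι) → (bipGraph adj).Walk (Sum.inr B) (Sum.inl (x l)),
      (∀ l, (p l).IsPath) ∧ PairwiseInternallyDisjoint p ∧ (∀ l, (p l).length ≤ 5) ∧
      (¬ (Injective fun l => group (x l)) → ∀ l, (p l).length ≤ 3) := by
  have injOn_adj : Set.InjOn (fun l => group (x l)) {l | adj (x l) B} :=
    fun l hl m hm h => hx (hT.node_eq h hl hm)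
  have injOn_not_adj : Set.InjOn (fun l => group (x l)) {l | ¬ adj (x l) B} :=
    fun l hl m hm h => hx (hT.eq_of_not_adj h hl hm)
  by_cases h : ∀ l, ¬ adj (x l) B → ∃ m ≠ l, ¬ adj (x m) B ∨ group (x m) = group (x l)
  · obtain ⟨σ, hσ, hσx⟩ := exists_injective_eq_iff (by simpa using hι) _ _
      injOn_adj injOn_not_adj h
    obtain ⟨p, hpath, hdisj, hlength⟩ := hT.exists_fan_length_le_three hx hσ hσx
    exact ⟨p, hpath, hdisj, fun l => (hlength l).trans (by norm_num), fun _ => hlength⟩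
  · push Not at h
    obtain ⟨l, hl, hm⟩ := h
    have hgroup : Injective fun l => group (x l) := by
      intro m n h
      obtain rfl | hml := eq_or_ne m l
      · exact of_not_not fun hmn => (hm n (Ne.symm hmn)).2 h.symm
      obtain rfl | hnl := eq_or_ne n l
      · exact absurd h (hm m hml).2
      exact injOn_adj (hm m hml).1 (hm n hnl).1 h
    obtain ⟨p, hpath, hdisj, hlength⟩ :=
      hT.exists_fan_length_le_five hgroup hl fun m hml => (hm m hml).1
    exact ⟨p, hpath, hdisj, hlength, fun h => absurd hgroup h⟩

/-- In a `[3,2]`-transversal design, given a block `B` and any `3`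
distinct nodes `x 0`, `x 1`, `x 2`, there are `3` pairwise internally-disjoint
paths from `B` to the three nodes.  Moreover, if the `3` nodes lie in `3` different
groups then each path has length at most `5`, whereas if they lie in only `2`
different groups then each path has length at most `3`. -/
theorem transversalDesign_three_two_fan {ν β : Type}
    (group : ν → Fin 3) (adj : ν → β → Prop)
    (hT : IsTransversalDesign 3 2 group adj)
    (B : β) (x : Fin 3 → ν) (hx : Function.Injective x) :
    ∃ p : (i : Fin 3) → (bipGraph adj).Walk (Sum.inr B) (Sum.inl (x i)),
      (∀ i : Fin 3, (p i).IsPath) ∧ PairwiseInternallyDisjoint p ∧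
      ((Function.Injective fun i : Fin 3 => group (x i)) →
        ∀ i : Fin 3, (p i).length ≤ 5) ∧
      (¬ (Function.Injective fun i : Fin 3 => group (x i)) →
        ∀ i : Fin 3, (p i).length ≤ 3) := by
  obtain ⟨p, hpath, hdisj, hfive, hthree⟩ :=
    transversalDesign_three_two_fan_general group adj hT (by simp) B x hx
  exact ⟨p, hpath, hdisj, fun _ => hfive, hthree⟩
end

section
/- Let k, Δ, d ≥ 2 and let H be built by the 2-step method from the connected (d,Δ)-bipartite graph H0 using the [Δ,k]-transversal design T. Let Q and Q' be distinct blocks of H0 such that there are λ ≥ 2 pairwise internally-disjoint paths in H0 from Q to Q', each of length at most μ. Then for any block B_{Q,V} ∈ B_Q of H and any block B_{Q',V'} ∈ B_{Q'} of H there are Δ pairwise internally-disjoint paths in H from B_{Q,V} to B_{Q',V'}, each of length at most μ + 4. -/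
/-- A `(d,Δ)`-bipartite graph: every node has degree `d` and every block has
degree (rank) `Δ`. -/
def IsBipartiteDegRank {ν β : Type} (d Δ : ℕ) (adj : ν → β → Prop) : Prop :=
  (∀ x : ν, Nat.card {b : β // adj x b} = d) ∧
  (∀ b : β, Nat.card {x : ν // adj x b} = Δ)

/-- The bipartite graph determined by `adj` has line-diameter `l`: the maximum,
over pairs of distinct blocks, of the distance between the two blocks is `l`. -/
def HasLineDiam {ν β : Type} (adj : ν → β → Prop) (l : ℕ) : Prop :=
  (∀ b b' : β, b ≠ b' → (bipGraph adj).dist (Sum.inr b) (Sum.inr b') ≤ l) ∧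
  (∃ b b' : β, b ≠ b' ∧ (bipGraph adj).dist (Sum.inr b) (Sum.inr b') = l)

/-- `adjH` describes the bipartite graph `H` built by the 2-step method from the
bipartite graph `H0` (given by `adj0`) and the `[Δ,k]`-transversal design `T`
(given by `groupT`, `adjT`): the nodes of `H` are the pairs `(p, j)` for `p` a node
of `H0` and `j : Fin k` (so the group `G_p` is `{p} × Fin k`), the blocks of `H`
are the pairs `(Q, b)` for `Q` a block of `H0` and `b` a block of `T` (so the set
`B_Q` is `{Q} × βT`, and such sets are automatically pairwise disjoint, as are the
edge sets of the copies `T_Q`), a node `(p, j)` is adjacent in `H` to a block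
`(Q, b)` only if `p` is adjacent to `Q` in `H0`, and for every block `Q` of `H0`
the nodes of the groups `G_p`, for `p` a neighbour of `Q` in `H0`, together with
the blocks of `B_Q` form a copy `T_Q` of `T` whose `Δ` groups are these groups. -/
structure TwoStep {ν0 β0 νT βT : Type} (Δ k : ℕ)
    (adj0 : ν0 → β0 → Prop) (groupT : νT → Fin Δ) (adjT : νT → βT → Prop)
    (adjH : ν0 × Fin k → β0 × βT → Prop) : Prop where
  td : IsTransversalDesign Δ k groupT adjT
  supp : ∀ (x : ν0 × Fin k) (Q : β0) (b : βT), adjH x (Q, b) → adj0 x.1 Q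
  copy : ∀ Q : β0, ∃ (enum : Fin Δ → ν0) (f : νT ≃ {x : ν0 × Fin k // adj0 x.1 Q})
      (g : βT ≃ βT),
    Function.Injective enum ∧ (∀ i : Fin Δ, adj0 (enum i) Q) ∧
    (∀ q : ν0, adj0 q Q → ∃ i : Fin Δ, enum i = q) ∧
    (∀ x : νT, ((f x : ν0 × Fin k).1 = enum (groupT x))) ∧
    (∀ (x : νT) (b : βT), adjT x b ↔ adjH (f x : ν0 × Fin k) (Q, g b))

/-!
Two of the given paths of `H0` contain disjoint *connectors*: paths from a neighbour of `Q` to a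
neighbour of `Q'` which meet the two neighbourhoods at their ends only. Over a connector there lie
`k` disjoint *lanes* of `H`, one for each label of the first node, and unless the connector is a
single node the permutation of the labels from one end to the other can be prescribed.

A node of `(Q, V)` reaches any label of any other neighbour of `Q` through one further block over
`Q`, and these hops are disjoint. A route is such a hop over `Q`, a lane, and a hop over `Q'`, which
accounts for four edges more than the connector. Since `Δ ≤ k + 1`, one connector can carry `Δ - 1`
of the routes and the other one the route that is left. A route beginning or ending over an end of
its connector needs no hop there and must use the lane of its own label, while the other routes have
to avoid that lane; this is arranged by permuting the targets of the routes. Finally, a node which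
is adjacent both to `(Q, V)` and to `(Q', V')` must be a route by itself, and the connectors are
chosen so that the permutation of the targets respects this.
-/

section WalkFamily

variable {V ι : Type} {G : SimpleGraph V} {x y : ι → V}

/-- A family of walks no two of which share a vertex, endpoints included. -/
def PairwiseVertexDisjoint (p : ∀ i, G.Walk (x i) (y i)) : Prop :=
  ∀ ⦃i j z⦄, z ∈ (p i).support → z ∈ (p j).support → i = j

theorem PairwiseVertexDisjoint.reverse {p : ∀ i, G.Walk (x i) (y i)}
    (hp : PairwiseVertexDisjoint p) : PairwiseVertexDisjoint fun i => (p i).reverse :=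
  fun i j z hi hj => hp (i := i) (j := j) (by simpa using hi) (by simpa using hj)

theorem PairwiseVertexDisjoint.exists_pairwiseInternallyDisjoint {p : ∀ i, G.Walk (x i) (y i)}
    (hp : PairwiseVertexDisjoint p) {n : ℕ} (hn : ∀ i, (p i).length ≤ n) {s t : V}
    (hs : ∀ i, G.Adj s (x i)) (ht : ∀ i, G.Adj (y i) t) :
    ∃ q : ι → G.Walk s t, (∀ i, (q i).IsPath ∧ (q i).length ≤ n + 2) ∧
      PairwiseInternallyDisjoint q := by
  classical
  let w i : G.Walk s t := .cons (hs i) ((p i).concat (ht i))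
  have hw {i z} (hz : z ∈ (w i).bypass.support) (hzst : z ≠ s ∧ z ≠ t) : z ∈ (p i).support := by
    simpa [w, hzst] using (w i).support_bypass_subset_support hz
  refine ⟨fun i => (w i).bypass, fun i => ⟨(w i).bypass_isPath, ?_⟩, fun _ _ _ _ hz => hz,
    fun i j z hzst hi hj => hp (hw hi (hzst i)) (hw hj (hzst j))⟩
  calc (w i).bypass.length ≤ (w i).length := (w i).length_bypass_le_length
    _ = (p i).length + 2 := by simp [w]
    _ ≤ n + 2 := Nat.add_le_add_right (hn i) 2

end WalkFamily

section BipGraph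

variable {ν β : Type} {adj : ν → β → Prop} {x y : ν} {b c : β}

theorem bipGraph_adj_inl_inr_s8 : (bipGraph adj).Adj (.inl x) (.inr b) ↔ adj x b := by
  simp [bipGraph]

theorem bipGraph_adj_inr_inl_s8 : (bipGraph adj).Adj (.inr b) (.inl x) ↔ adj x b := by
  simp [bipGraph]

theorem not_bipGraph_adj_inl_inl : ¬ (bipGraph adj).Adj (.inl x) (.inl y) := by
  simp [bipGraph]

theorem not_bipGraph_adj_inr_inr : ¬ (bipGraph adj).Adj (.inr b) (.inr c) := by
  simp [bipGraph]

end BipGraph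

/-- The incidence structure of the graph `H` over `H0`, with nodes labelled by `κ` inside each
group: over every block `Q` of `H0`, the nodes and blocks of `H` form a transversal design whose
groups are the neighbours of `Q`. -/
structure IsTransversalLift {ν0 β0 βT κ : Type} (adj0 : ν0 → β0 → Prop)
    (adjH : ν0 × κ → β0 × βT → Prop) : Prop where
  adj_of_adj : ∀ {p j Q b}, adjH (p, j) (Q, b) → adj0 p Q
  existsUnique_label : ∀ {p Q} (b), adj0 p Q → ∃! j, adjH (p, j) (Q, b)
  existsUnique_block : ∀ {p p' Q} (j j'), adj0 p Q → adj0 p' Q → p ≠ p' →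
    ∃! b, adjH (p, j) (Q, b) ∧ adjH (p', j') (Q, b)

namespace TwoStep

variable {ν0 β0 νT βT : Type} {Δ k : ℕ} {adj0 : ν0 → β0 → Prop} {groupT : νT → Fin Δ}
  {adjT : νT → βT → Prop} {adjH : ν0 × Fin k → β0 × βT → Prop}

theorem exists_chart (h : TwoStep Δ k adj0 groupT adjT adjH) (Q : β0) :
    ∃ (e : {x : ν0 × Fin k // adj0 x.1 Q} ≃ νT) (i : {p // adj0 p Q} ≃ Fin Δ) (g : βT ≃ βT),
      (∀ x, groupT (e x) = i ⟨x.1.1, x.2⟩) ∧ ∀ x b, adjH x.1 (Q, b) ↔ adjT (e x) (g b) := by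
  obtain ⟨enum, f, g, hinj, henum, hsurj, hf, hfg⟩ := h.copy Q
  let i : Fin Δ ≃ {p // adj0 p Q} := .ofBijective (fun n => ⟨enum n, henum n⟩)
    ⟨fun _ _ hn => hinj (congrArg Subtype.val hn), fun ⟨p, hp⟩ => by simpa using hsurj p hp⟩
  refine ⟨f.symm, i.symm, g.symm, fun x => ?_, fun x b => ?_⟩
  · exact i.eq_symm_apply.2 (Subtype.ext ((hf (f.symm x)).symm.trans
      (by rw [f.apply_symm_apply])))
  · simp [hfg]

theorem isTransversalLift (h : TwoStep Δ k adj0 groupT adjT adjH) :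
    IsTransversalLift adj0 adjH where
  adj_of_adj hb := h.supp _ _ _ hb
  existsUnique_label {p Q} b hp := by
    obtain ⟨e, i, g, hei, heg⟩ := h.exists_chart Q
    obtain ⟨x, ⟨hxp, hxb⟩, hx⟩ := h.td.blockMeets (g b) (i ⟨p, hp⟩)
    obtain ⟨⟨⟨p', j⟩, hp'⟩, rfl⟩ := e.surjective x
    obtain rfl : p' = p := by simpa [hei] using hxp
    refine ⟨j, (heg ⟨_, hp'⟩ b).2 hxb, fun j' hj' => ?_⟩
    simpa using hx (e ⟨(p', j'), hp⟩) ⟨hei _, (heg ⟨_, hp⟩ b).1 hj'⟩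
  existsUnique_block {p p' Q} j j' hp hp' hne := by
    obtain ⟨e, i, g, hei, heg⟩ := h.exists_chart Q
    have hpair := h.td.pairGen (e ⟨(p, j), hp⟩) (e ⟨(p', j'), hp'⟩) (by simpa [hei] using hne)
    have hadj b := and_congr (heg ⟨(p, j), hp⟩ b) (heg ⟨(p', j'), hp'⟩ b)
    simpa only [hadj] using (g.existsUnique_congr fun {b} => Iff.rfl).2 hpair

end TwoStep

namespace IsTransversalLift

variable {ν0 β0 βT κ : Type} {adj0 : ν0 → β0 → Prop} {adjH : ν0 × κ → β0 × βT → Prop}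

theorem label_unique (hT : IsTransversalLift adj0 adjH) {p j j' Q b}
    (h : adjH (p, j) (Q, b)) (h' : adjH (p, j') (Q, b)) : j = j' :=
  (hT.existsUnique_label b (hT.adj_of_adj h)).unique h h'

theorem block_unique (hT : IsTransversalLift adj0 adjH) {p p' j j' Q b b'} (hne : p ≠ p')
    (h : adjH (p, j) (Q, b)) (h' : adjH (p', j') (Q, b))
    (hb : adjH (p, j) (Q, b')) (hb' : adjH (p', j') (Q, b')) : b = b' :=
  (hT.existsUnique_block j j' (hT.adj_of_adj h) (hT.adj_of_adj h') hne).unique ⟨h, h'⟩ ⟨hb, hb'⟩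

/-- The blocks joining a node `(a, z)` off the block `V` to the nodes of `V` outside the group of
`a` are distinct, so they meet the group of another neighbour `b` in distinct labels. -/
theorem card_neighbors_le [Fintype κ] [Nontrivial κ] (hT : IsTransversalLift adj0 adjH) (Q : β0)
    [Fintype {p // adj0 p Q}] (V : βT) :
    Fintype.card {p // adj0 p Q} ≤ Fintype.card κ + 1 := by
  classical
  choose X hX _ using fun p : {p // adj0 p Q} => hT.existsUnique_label V p.2
  rcases subsingleton_or_nontrivial {p // adj0 p Q} with _ | ⟨a, b, hab⟩
  · exact Fintype.card_le_one_iff_subsingleton.2 ‹_› |>.trans (Nat.le_add_left _ _)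
  obtain ⟨z, hz⟩ := exists_ne (X a)
  have hval {p p' : {p // adj0 p Q}} (h : p ≠ p') : p.1 ≠ p'.1 := Subtype.coe_ne_coe.2 h
  choose B hB _ using fun p : {p // p ≠ a} =>
    hT.existsUnique_block (X p) z p.1.2 a.2 (hval p.2)
  choose l hl _ using fun p => hT.existsUnique_label (B p) b.2
  have hl_inj : Function.Injective l := fun p p' hpp' => by
    have hBB : B p = B p' := hT.block_unique (hval hab) (hB p).2 (hl p) (hB p').2 (hpp' ▸ hl p')
    by_contra hne
    have hBV : B p = V := hT.block_unique (hval fun h => hne (Subtype.ext h))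
      (hB p).1 (hBB ▸ (hB p').1) (hX p) (hX p')
    exact hz (hT.label_unique (hB p).2 (hBV ▸ hX a))
  have hcard := Fintype.card_le_of_injective l hl_inj
  rw [Fintype.card_subtype_compl, Fintype.card_subtype_eq] at hcard
  omega

end IsTransversalLift

section Lanes

variable {ν0 β0 βT κ : Type} {adj0 : ν0 → β0 → Prop} {adjH : ν0 × κ → β0 × βT → Prop}

/-- The vertex of `H0` over which a vertex of `H` lies. -/
def baseVertex : (ν0 × κ) ⊕ (β0 × βT) → ν0 ⊕ β0 :=
  Sum.map Prod.fst Prod.fst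

/-- A family of disjoint walks of `H` lying over a path `π` of `H0` between two nodes, one from
each node over the start of `π`. The walk starting at label `l` ends at label `ρ l`. -/
structure IsLaneFamily {u v : ν0} (π : (bipGraph adj0).Walk (.inl u) (.inl v)) (ρ : κ → κ)
    (M : ∀ l, (bipGraph adjH).Walk (.inl (u, l)) (.inl (v, ρ l))) : Prop where
  length_le : ∀ l, (M l).length ≤ π.length
  baseVertex_mem : ∀ {l z}, z ∈ (M l).support → baseVertex z ∈ π.support
  disjoint : PairwiseVertexDisjoint M

theorem IsTransversalLift.exists_isLaneFamily_cons (hT : IsTransversalLift adj0 adjH)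
    {u w v : ν0} {e : β0} {π : (bipGraph adj0).Walk (.inl w) (.inl v)}
    (hue : (bipGraph adj0).Adj (.inl u) (.inr e)) (hew : (bipGraph adj0).Adj (.inr e) (.inl w))
    (hu : .inl u ∉ π.support) (he : .inr e ∉ π.support) {ρ : κ → κ} (hρ : ρ.Injective)
    {M : ∀ l, (bipGraph adjH).Walk (.inl (w, l)) (.inl (v, l))} (hM : IsLaneFamily π id M) :
    ∃ M' : ∀ l, (bipGraph adjH).Walk (.inl (u, l)) (.inl (v, ρ l)),
      IsLaneFamily (.cons hue (.cons hew π)) ρ M' := by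
  have huw : u ≠ w := by
    rintro rfl
    exact hu π.start_mem_support
  choose B hB _ using fun l => hT.existsUnique_block l (ρ l) (bipGraph_adj_inl_inr_s8.1 hue)
    (bipGraph_adj_inr_inl_s8.1 hew) huw
  have hu' l l' : .inl (u, l) ∉ (M l').support := fun h => hu (hM.baseVertex_mem h)
  have he' b l : .inr (e, b) ∉ (M l).support := fun h => he (hM.baseVertex_mem h)
  refine ⟨fun l => .cons (bipGraph_adj_inl_inr_s8.2 (hB l).1)
    (.cons (bipGraph_adj_inr_inl_s8.2 (hB l).2) (M (ρ l))), fun l => ?_, fun {l z} hz => ?_,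
    fun l l' z hz hz' => ?_⟩
  · simpa using hM.length_le (ρ l)
  · simp only [SimpleGraph.Walk.support_cons, List.mem_cons] at hz ⊢
    rcases hz with rfl | rfl | hz
    · exact .inl rfl
    · exact .inr (.inl rfl)
    · exact .inr (.inr (hM.baseVertex_mem hz))
  · simp only [SimpleGraph.Walk.support_cons, List.mem_cons] at hz hz'
    rcases hz with rfl | rfl | hz
    · simpa [hu'] using hz'
    · obtain hBB : B l = B l' := by simpa [he'] using hz'
      exact hT.label_unique (hB l).1 (hBB ▸ (hB l').1)
    · rcases hz' with rfl | rfl | hz'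
      · exact absurd hz (hu' _ _)
      · exact absurd hz (he' _ _)
      · exact hρ (hM.disjoint hz hz')

/-- All relabelling happens in the first step of the path, so it is free unless the path is
trivial. -/
theorem IsTransversalLift.exists_isLaneFamily (hT : IsTransversalLift adj0 adjH) {u v : ν0}
    (π : (bipGraph adj0).Walk (.inl u) (.inl v)) (hπ : π.IsPath) {ρ : κ → κ}
    (hρ : ρ.Injective) (huv : u = v → ρ = id) :
    ∃ M : ∀ l, (bipGraph adjH).Walk (.inl (u, l)) (.inl (v, ρ l)), IsLaneFamily π ρ M := by
  match π, hπ with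
  | .nil, _ =>
    obtain rfl := huv rfl
    exact ⟨fun _ => .nil, fun _ => le_rfl, fun hz => by simp_all [baseVertex],
      fun _ _ _ hz hz' => by simp_all⟩
  | .cons (v := .inl _) h _, _ => exact absurd h not_bipGraph_adj_inl_inl
  | .cons (v := .inr _) _ (.cons (v := .inr _) h _), _ => exact absurd h not_bipGraph_adj_inr_inr
  | .cons (v := .inr e) hue (.cons (v := .inl w) hew π), hπ =>
    simp only [SimpleGraph.Walk.cons_isPath_iff, SimpleGraph.Walk.support_cons,
      List.mem_cons, not_or] at hπ
    obtain ⟨⟨hπ, he⟩, -, hu⟩ := hπ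
    obtain ⟨M, hM⟩ := hT.exists_isLaneFamily π hπ Function.injective_id fun _ => rfl
    exact hT.exists_isLaneFamily_cons hue hew hu he hρ hM
  termination_by π.length

end Lanes

/-- A path of nodes and blocks from a neighbour of the block `Q` to a neighbour of the block `Q'`,
avoiding both blocks and meeting their neighbourhoods at its ends only. It may consist of a single
common neighbour. -/
structure Connector {ν β : Type} (adj : ν → β → Prop) (Q Q' : β) where
  start : {p // adj p Q}
  finish : {p // adj p Q'}
  walk : (bipGraph adj).Walk (.inl start) (.inl finish)
  isPath : walk.IsPath
  eq_start : ∀ {w : {p // adj p Q}}, .inl w.1 ∈ walk.support → w = start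
  eq_finish : ∀ {w : {p // adj p Q'}}, .inl w.1 ∈ walk.support → w = finish
  notMem_left : .inr Q ∉ walk.support
  notMem_right : .inr Q' ∉ walk.support

theorem exists_tail_of_isPath {ν β : Type} {adj : ν → β → Prop} {Q : β} {x : ν ⊕ β}
    (q : (bipGraph adj).Walk (.inr Q) x) (hq : q.IsPath) (hx : x ≠ .inr Q) :
    ∃ (u : {p // adj p Q}) (r : (bipGraph adj).Walk (.inl u) x), r.IsPath ∧
      r.length + 1 = q.length ∧ .inr Q ∉ r.support ∧ r.support ⊆ q.support := by
  match q, hq with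
  | .nil, _ => exact absurd rfl hx
  | .cons (v := .inr _) h _, _ => exact absurd h not_bipGraph_adj_inr_inr
  | .cons (v := .inl u) h r, hq =>
    rw [SimpleGraph.Walk.cons_isPath_iff] at hq
    exact ⟨⟨u, bipGraph_adj_inr_inl_s8.1 h⟩, r, hq.1, by simp, hq.2, by simp⟩

namespace Connector

variable {ν β : Type} {adj : ν → β → Prop} {Q Q' : β}

theorem exists_of_walk {u : {p // adj p Q}} {v : {p // adj p Q'}}
    (p : (bipGraph adj).Walk (.inl u) (.inl v)) (hQ : .inr Q ∉ p.support)
    (hQ' : .inr Q' ∉ p.support) :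
    ∃ c : Connector adj Q Q', c.walk.length ≤ p.length ∧ c.walk.support ⊆ p.support := by
  classical
  by_cases hstart : ∃ w : {p // adj p Q}, .inl w.1 ∈ p.support ∧ w ≠ u
  · obtain ⟨w, hw, hwu⟩ := hstart
    have hsub := p.support_dropUntil_subset_support hw
    have hlt := p.length_dropUntil_lt_length hw (by simpa [Subtype.ext_iff] using hwu)
    obtain ⟨c, hc, hcp⟩ := exists_of_walk (p.dropUntil _ hw) (fun h => hQ (hsub h))
      fun h => hQ' (hsub h)
    exact ⟨c, hc.trans hlt.le, List.Subset.trans hcp hsub⟩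
  by_cases hfinish : ∃ w : {p // adj p Q'}, .inl w.1 ∈ p.support ∧ w ≠ v
  · obtain ⟨w, hw, hwv⟩ := hfinish
    have hsub := p.support_takeUntil_subset_support hw
    have hlt := p.length_takeUntil_lt_length hw (by simpa [Subtype.ext_iff] using hwv)
    obtain ⟨c, hc, hcp⟩ := exists_of_walk (p.takeUntil _ hw) (fun h => hQ (hsub h))
      fun h => hQ' (hsub h)
    exact ⟨c, hc.trans hlt.le, List.Subset.trans hcp hsub⟩
  push Not at hstart hfinish
  have hsub := p.support_bypass_subset_support
  exact ⟨⟨u, v, p.bypass, p.bypass_isPath, fun h => hstart _ (hsub h),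
    fun h => hfinish _ (hsub h), fun h => hQ (hsub h), fun h => hQ' (hsub h)⟩,
    p.length_bypass_le_length, hsub⟩
  termination_by p.length

theorem exists_of_isPath (hQQ : Q ≠ Q') (q : (bipGraph adj).Walk (.inr Q) (.inr Q'))
    (hq : q.IsPath) :
    ∃ c : Connector adj Q Q', c.walk.length + 2 ≤ q.length ∧ c.walk.support ⊆ q.support := by
  obtain ⟨u, r, hr, hrq, hQr, hrs⟩ :=
    exists_tail_of_isPath q hq (Sum.inr_injective.ne hQQ.symm)
  obtain ⟨v, t, -, htr, hQt, hts⟩ :=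
    exists_tail_of_isPath r.reverse hr.reverse (by simp)
  have hsub : t.reverse.support ⊆ r.support := fun z hz => by simpa using hts (by simpa using hz)
  obtain ⟨c, hc, hct⟩ := exists_of_walk t.reverse (fun h => hQr (hsub h)) (by simpa using hQt)
  simp only [SimpleGraph.Walk.length_reverse] at hc htr
  exact ⟨c, by omega, List.Subset.trans hct (List.Subset.trans hsub hrs)⟩

theorem start_eq_finish (c : Connector adj Q Q') (h : adj c.start Q') :
    c.start.1 = c.finish := by
  rw [← c.eq_finish (w := ⟨c.start, h⟩) c.walk.start_mem_support]

theorem start_injective {I : Type} {d : I → Connector adj Q Q'}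
    (hd : PairwiseVertexDisjoint fun i => (d i).walk) : Function.Injective fun i => (d i).start :=
  fun i j hij =>
    hd (d i).walk.start_mem_support (by simpa only [hij] using (d j).walk.start_mem_support)

/-- The trivial connector at a common neighbour. -/
def single (p : {p // adj p Q}) (hp : adj p Q') : Connector adj Q Q' where
  start := p
  finish := ⟨p, hp⟩
  walk := .nil
  isPath := .nil
  eq_start h := by simpa [Subtype.ext_iff] using h
  eq_finish h := by simpa [Subtype.ext_iff] using h
  notMem_left := by simp
  notMem_right := by simp

theorem support_walk_single (p : {p // adj p Q}) (hp : adj p Q') :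
    (single p hp).walk.support = [.inl p.1] := rfl

theorem pairwiseVertexDisjoint_pair {c c' : Connector adj Q Q'}
    (h : List.Disjoint c.walk.support c'.walk.support) :
    PairwiseVertexDisjoint fun i => (![c, c'] i).walk := by
  intro i j z hi hj
  fin_cases i <;> fin_cases j
  · rfl
  · exact absurd hj (h hi)
  · exact absurd hi (h hj)
  · rfl

/-- In the application two routes through a common neighbour in `A` are bound to meet, unless they
are one and the same. As far as two connectors allow, the elements of `A` are therefore made
connectors of their own. -/
theorem exists_pair_of_disjoint {c c' : Connector adj Q Q'}
    (h : List.Disjoint c.walk.support c'.walk.support) {L : ℕ} (hc : c.walk.length ≤ L)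
    (hc' : c'.walk.length ≤ L) {A : Set {p // adj p Q}} (hA : ∀ p ∈ A, adj p Q') :
    ∃ d : Fin 2 → Connector adj Q Q', PairwiseVertexDisjoint (fun i => (d i).walk) ∧
      (∀ i, (d i).walk.length ≤ L) ∧
      ((∀ i, (d i).start.1 ≠ (d i).finish ∨ (d i).start ∈ A) ∨
        A ⊆ Set.range fun i => (d i).start) := by
  by_cases hsub : A.Subsingleton
  · rcases hsub.eq_empty_or_singleton with rfl | ⟨p, rfl⟩
    · exact ⟨![c, c'], pairwiseVertexDisjoint_pair h, Fin.forall_fin_two.2 ⟨hc, hc'⟩,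
        .inr (Set.empty_subset _)⟩
    obtain ⟨e, he, hpe⟩ : ∃ e : Connector adj Q Q', e.walk.length ≤ L ∧
        .inl p.1 ∉ e.walk.support := by
      by_cases hpc : .inl p.1 ∈ c.walk.support
      · exact ⟨c', hc', h hpc⟩
      · exact ⟨c, hc, hpc⟩
    refine ⟨![single p (hA p rfl), e], pairwiseVertexDisjoint_pair ?_,
      Fin.forall_fin_two.2 ⟨Nat.zero_le L, he⟩, .inr ?_⟩
    · simpa [support_walk_single] using hpe
    · rintro _ rfl
      exact ⟨0, rfl⟩
  · obtain ⟨p, hp, r, hr, hpr⟩ := Set.not_subsingleton_iff.1 hsub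
    refine ⟨![single p (hA p hp), single r (hA r hr)], pairwiseVertexDisjoint_pair ?_,
      Fin.forall_fin_two.2 ⟨Nat.zero_le L, Nat.zero_le L⟩,
      .inl (Fin.forall_fin_two.2 ⟨.inr hp, .inr hr⟩)⟩
    simpa [support_walk_single, Subtype.ext_iff, eq_comm] using hpr

theorem exists_equiv_apply_start_eq_finish {I : Type} {d : I → Connector adj Q Q'}
    (hd : PairwiseVertexDisjoint fun i => (d i).walk)
    [Fintype {p // adj p Q}] [Fintype {p // adj p Q'}]
    (hcard : Fintype.card {p // adj p Q} = Fintype.card {p // adj p Q'}) :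
    ∃ σ : {p // adj p Q} ≃ {p // adj p Q'}, (∀ p, adj p.1 Q' → (σ p).1 = p.1) ∧
      ∀ i, σ (d i).start = (d i).finish := by
  let f : {p // adj p Q} → ν := Function.extend (fun i => (d i).start) (fun i => (d i).finish) (↑)
  have hf_start i : f (d i).start = (d i).finish := (start_injective hd).extend_apply _ _ i
  have hf_common p (hp : adj p.1 Q') : f p = p := by
    by_cases hi : ∃ i, (d i).start = p
    · obtain ⟨i, rfl⟩ := hi
      rw [hf_start, (d i).start_eq_finish hp]
    · exact Function.extend_apply' _ _ _ hi
  let s : Set {p // adj p Q} := {p | adj p.1 Q' ∨ ∃ i, (d i).start = p}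
  have hmaps : s.MapsTo f
      (Finset.univ.map (Function.Embedding.subtype fun p => adj p Q') : Finset ν) := by
    rintro p (hp | ⟨i, rfl⟩)
    · simpa [hf_common p hp] using hp
    · simp [hf_start]
  have hinj : s.InjOn f := by
    rintro p (hp | ⟨i, rfl⟩) r (hr | ⟨j, rfl⟩) hpr
    · exact Subtype.ext (hf_common p hp ▸ hf_common r hr ▸ hpr)
    · rw [hf_common p hp, hf_start] at hpr
      exact (d j).eq_start (by simp [hpr])
    · rw [hf_common r hr, hf_start] at hpr
      exact ((d i).eq_start (by simp [← hpr])).symm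
    · rw [hf_start, hf_start] at hpr
      rw [hd (d i).walk.end_mem_support (by simpa only [hpr] using (d j).walk.end_mem_support)]
  obtain ⟨g, hg⟩ := hmaps.exists_equiv_extend_of_card_eq (by simpa using hcard) hinj
  refine ⟨g.trans (Equiv.subtypeEquivRight (by simp)), fun p hp => ?_, fun i => Subtype.ext ?_⟩
  · exact (hg p (.inl hp)).trans (hf_common p hp)
  · exact (hg _ (.inr ⟨i, rfl⟩)).trans (hf_start i)

end Connector

section Routing

theorem exists_perm_apply_eq_iff {ι : Type*} {a b : ι} (hab : a ≠ b) (P : Prop) :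
    ∃ τ : Equiv.Perm ι, τ a = a ↔ P := by
  classical
  by_cases hP : P
  · exact ⟨1, by simpa using hP⟩
  · exact ⟨Equiv.swap a b, by simpa [hP] using hab.symm⟩

theorem exists_perm_apply_eq_iff_and_apply_eq {ι : Type*} {a b c : ι} (hab : a ≠ b) (hca : c ≠ a)
    (hcb : c ≠ b) (P : Prop) : ∃ τ : Equiv.Perm ι, (τ a = a ↔ P) ∧ τ c = b := by
  classical
  by_cases hP : P
  · exact ⟨Equiv.swap b c, by simp [hP, Equiv.swap_apply_of_ne_of_ne hab hca.symm], by simp⟩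
  · refine ⟨Equiv.swap b c * Equiv.swap a b, by simpa [hP] using hca, ?_⟩
    rw [Equiv.Perm.mul_apply, Equiv.swap_apply_of_ne_of_ne hca hcb, Equiv.swap_apply_right]

variable {ι I κ : Type}

theorem exists_injOn_apply_eq_apply_eq [Fintype κ] {s : Finset ι} (hs : s.card ≤ Fintype.card κ)
    {a b : ι} (ha : a ∈ s) (hb : b ∈ s) {x y : κ} (hab : a = b ↔ x = y) :
    ∃ f : ι → κ, Set.InjOn f s ∧ f a = x ∧ f b = y := by
  classical
  have : Nonempty κ := ⟨x⟩
  obtain ⟨g, -, hg⟩ := s.finite_toSet.exists_injOn_of_encard_le (t := (Set.univ : Set κ))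
    (by simpa [Set.encard_univ] using hs)
  let f : ι → κ := Equiv.swap (g a) x ∘ g
  have hf : Set.InjOn f s := (Equiv.injective _).comp_injOn hg
  have hfa : f a = x := Equiv.swap_apply_left _ _
  refine ⟨Equiv.swap (f b) y ∘ f, (Equiv.injective _).comp_injOn hf, ?_,
    Equiv.swap_apply_left _ _⟩
  rw [Function.comp_apply, hfa]
  by_cases h : a = b
  · rw [← h, hfa, ← hab.1 h, Equiv.swap_self, Equiv.refl_apply]
  · exact Equiv.swap_apply_of_ne_of_ne (fun hx => h (hf ha hb (hfa.trans hx))) (mt hab.2 h)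

/-- An assignment `m` of a hub and a label, that is, of a lane, to every route in a set `ι` of
routes, no two routes sharing a lane. Hub `i` starts over the source of the route `h i`, which must
use the label `x i` if it uses the hub at all, and finishes over the target of the route which `τ`
sends to `h i`, which must then use the label `y i`; no other route on the hub may use these
labels. -/
structure IsRouting (h : I → ι) (x y : I → κ) (τ : Equiv.Perm ι) (m : ι → I × κ) : Prop where
  injective : Function.Injective m
  source_iff : ∀ p, p = h (m p).1 ↔ (m p).2 = x (m p).1
  target_iff : ∀ p, τ p = h (m p).1 ↔ (m p).2 = y (m p).1

variable {h : I → ι} {x y : I → κ} {τ : Equiv.Perm ι} [Fintype ι] [Fintype κ]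

theorem exists_isRouting_of_card_le (hcard : Fintype.card ι ≤ Fintype.card κ) {i : I}
    (hi : τ (h i) = h i ↔ x i = y i) : ∃ m, IsRouting h x y τ m := by
  obtain ⟨f, hf, hfx, hfy⟩ := exists_injOn_apply_eq_apply_eq (s := Finset.univ)
    (by simpa using hcard) (Finset.mem_univ (h i)) (Finset.mem_univ (τ.symm (h i)))
    (x := x i) (y := y i) (by rw [← hi, Equiv.eq_symm_apply])
  rw [Finset.coe_univ, Set.injOn_univ] at hf
  refine ⟨fun p => (i, f p), fun p r hpr => hf (congrArg Prod.snd hpr), fun p => ?_, fun p => ?_⟩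
  · exact hfx ▸ hf.eq_iff.symm
  · rw [← Equiv.eq_symm_apply, ← hfy, hf.eq_iff]

theorem exists_isRouting_of_card_le_succ (hcard : Fintype.card ι ≤ Fintype.card κ + 1) {i j : I}
    (hij : i ≠ j) (hi : τ (h i) = h i ↔ x i = y i) {c : ι} (hc : c ≠ h i) (hτc : τ c ≠ h i)
    {l : κ} (hlx : c = h j ↔ l = x j) (hly : τ c = h j ↔ l = y j) :
    ∃ m, IsRouting h x y τ m := by
  classical
  obtain ⟨f, hf, hfx, hfy⟩ := exists_injOn_apply_eq_apply_eq (s := Finset.univ.erase c)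
    (by rw [Finset.card_erase_of_mem (Finset.mem_univ c), Finset.card_univ]; omega)
    (a := h i) (b := τ.symm (h i)) (by simpa using hc.symm)
    (by simpa [Equiv.symm_apply_eq] using hτc.symm)
    (x := x i) (y := y i) (by rw [← hi, Equiv.eq_symm_apply])
  have hf' {p r} (hp : p ≠ c) (hr : r ≠ c) : f p = f r ↔ p = r :=
    hf.eq_iff (by simpa using hp) (by simpa using hr)
  refine ⟨fun p => if p = c then (j, l) else (i, f p), fun p r hpr => ?_, fun p => ?_, fun p => ?_⟩
  · by_cases hp : p = c <;> by_cases hr : r = c <;>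
      simp only [hp, hr, if_true, if_false, Prod.mk.injEq, hij, hij.symm, false_and,
        true_and] at hpr
    · exact hp.trans hr.symm
    · exact (hf' hp hr).1 hpr
  · by_cases hp : p = c
    · simpa [hp] using hlx
    · simpa [hp, ← hfx] using (hf' hp hc.symm).symm
  · by_cases hp : p = c
    · simpa [hp] using hly
    · have hτ : τ.symm (h i) ≠ c := fun h => hτc (by simp [← h])
      simpa [hp, ← hfy, Equiv.eq_symm_apply] using (hf' hp hτ).symm

theorem exists_isRouting_and_apply_eq_iff (hcard : Fintype.card ι ≤ Fintype.card κ + 1) {i j : I}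
    (hij : h i ≠ h j) (hj : x j ≠ y j) :
    ∃ τ m, IsRouting h x y τ m ∧ (τ (h i) = h i ↔ x i = y i) := by
  classical
  by_cases hc : ∃ c, c ≠ h i ∧ c ≠ h j
  · obtain ⟨c, hci, hcj⟩ := hc
    obtain ⟨τ, hτi, hτc⟩ := exists_perm_apply_eq_iff_and_apply_eq hij hci hcj (x i = y i)
    obtain ⟨m, hm⟩ := exists_isRouting_of_card_le_succ (h := h) hcard (ne_of_apply_ne h hij) hτi
      hci (hτc ▸ hij.symm) (l := y j) (by simp [hcj, hj.symm]) (by simp [hτc])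
    exact ⟨τ, m, hm, hτi⟩
  · push Not at hc
    obtain ⟨τ, hτi⟩ := exists_perm_apply_eq_iff hij (x i = y i)
    have hle : Fintype.card ι ≤ Fintype.card κ :=
      calc Fintype.card ι ≤ ({h i, h j} : Finset ι).card :=
            Finset.card_le_card fun p _ => by simpa [or_iff_not_imp_left] using hc p
        _ ≤ 2 := Finset.card_le_two
        _ ≤ Fintype.card κ := Fintype.one_lt_card_iff.2 ⟨x j, y j, hj⟩
    obtain ⟨m, hm⟩ := exists_isRouting_of_card_le hle hτi
    exact ⟨τ, m, hm, hτi⟩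

/-- Two hubs suffice when there is at most one route more than labels: one hub carries a single
route and the other one all the rest. The identity serves as `τ` if `x = y`; otherwise the routes
in `A`, which `τ` has to fix, start at the hubs. -/
theorem exists_isRouting {h : Fin 2 → ι} {x y : Fin 2 → κ} (hh : h.Injective)
    (hcard : Fintype.card ι ≤ Fintype.card κ + 1) {A : Set ι} (hA : ∀ i, h i ∈ A → x i = y i)
    (hA' : (∀ i, x i = y i) ∨ A ⊆ Set.range h) :
    ∃ τ m, IsRouting h x y τ m ∧ ∀ p ∈ A, τ p = p := by
  by_cases hxy : ∀ i, x i = y i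
  · obtain ⟨m, hm⟩ := exists_isRouting_of_card_le_succ (h := h) (τ := 1) hcard zero_ne_one
      (by simpa using hxy 0) (c := h 1) (hh.ne one_ne_zero) (hh.ne one_ne_zero) (l := x 1)
      (by simp) (by simpa using hxy 1)
    exact ⟨1, m, hm, fun _ _ => rfl⟩
  obtain ⟨j, hj⟩ := not_forall.1 hxy
  obtain ⟨i, hij⟩ := exists_ne j
  obtain ⟨τ, m, hm, hτ⟩ := exists_isRouting_and_apply_eq_iff hcard (hh.ne hij) hj
  refine ⟨τ, m, hm, fun p hp => ?_⟩
  obtain ⟨l, rfl⟩ := hA'.resolve_left hxy hp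
  obtain rfl : l = i := by
    have : l ≠ j := fun h => hj (h ▸ hA l hp)
    omega
  exact hτ.2 (hA l hp)

end Routing

namespace IsTransversalLift

variable {ν0 β0 βT κ : Type} {adj0 : ν0 → β0 → Prop} {adjH : ν0 × κ → β0 × βT → Prop}

theorem exists_hop (hT : IsTransversalLift adj0 adjH) {p r : ν0} {Q : β0} {V : βT} {j x l : κ}
    (hp : adjH (p, j) (Q, V)) (hr : adjH (r, x) (Q, V)) (hpr : p = r ↔ l = x) :
    ∃ W : (bipGraph adjH).Walk (.inl (p, j)) (.inl (r, l)), W.length ≤ 2 ∧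
      ∀ z ∈ W.support, z = .inl (p, j) ∨ z = .inl (r, l) ∨
        ∃ B ≠ V, z = .inr (Q, B) ∧ adjH (p, j) (Q, B) := by
  by_cases h : p = r
  · obtain rfl := h
    obtain rfl := hpr.1 rfl
    obtain rfl := hT.label_unique hp hr
    exact ⟨.nil, Nat.zero_le 2, fun z hz => .inl (by simpa using hz)⟩
  obtain ⟨B, ⟨hpB, hrB⟩, -⟩ :=
    hT.existsUnique_block j l (hT.adj_of_adj hp) (hT.adj_of_adj hr) h
  have hBV : B ≠ V := by
    rintro rfl
    exact h (hpr.2 (hT.label_unique hrB hr))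
  refine ⟨.cons (bipGraph_adj_inl_inr_s8.2 hpB) (.cons (bipGraph_adj_inr_inl_s8.2 hrB) .nil), le_rfl,
    fun z hz => ?_⟩
  simp only [SimpleGraph.Walk.support_cons, SimpleGraph.Walk.support_nil, List.mem_cons,
    List.not_mem_nil, or_false] at hz
  rcases hz with rfl | rfl | rfl
  · exact .inl rfl
  · exact .inr (.inr ⟨B, hBV, rfl, hpB⟩)
  · exact .inr (.inl rfl)

/-- Distinct hops use distinct blocks because two nodes of `V` have no other block in common. -/
theorem exists_prepend_hops (hT : IsTransversalLift adj0 adjH) {ι : Type} {Q : β0} {V : βT}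
    {s r : ι → ν0} {j x l : ι → κ} (hs : s.Injective) (hsV : ∀ p, adjH (s p, j p) (Q, V))
    (hrV : ∀ p, adjH (r p, x p) (Q, V)) (hsr : ∀ p, s p = r p ↔ l p = x p)
    {e : ι → (ν0 × κ) ⊕ (β0 × βT)} {N : ∀ p, (bipGraph adjH).Walk (.inl (r p, l p)) (e p)}
    (hN : PairwiseVertexDisjoint N)
    (hsN : ∀ {p p'}, .inl (s p, j p) ∈ (N p').support → p = p')
    (hQN : ∀ {p b}, .inr (Q, b) ∉ (N p).support) :
    ∃ W : ∀ p, (bipGraph adjH).Walk (.inl (s p, j p)) (e p),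
      PairwiseVertexDisjoint W ∧ (∀ p, (W p).length ≤ (N p).length + 2) ∧
      ∀ {p z}, z ∈ (W p).support →
        z ∈ (N p).support ∨ z = .inl (s p, j p) ∨ ∃ b, z = .inr (Q, b) := by
  choose P hP2 hP using fun p => hT.exists_hop (hsV p) (hrV p) (hsr p)
  have hW {p z} (hz : z ∈ ((P p).append (N p)).support) : z ∈ (N p).support ∨
      z = .inl (s p, j p) ∨ ∃ B ≠ V, z = .inr (Q, B) ∧ adjH (s p, j p) (Q, B) := by
    rcases (SimpleGraph.Walk.mem_support_append_iff _ _).1 hz with hz | hz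
    · rcases hP p z hz with h | rfl | h
      · exact .inr (.inl h)
      · exact .inl (N p).start_mem_support
      · exact .inr (.inr h)
    · exact .inl hz
  refine ⟨fun p => (P p).append (N p), fun p p' z hz hz' => ?_, fun p => ?_, fun hz => ?_⟩
  · rcases hW hz with hz | rfl | ⟨B, hBV, rfl, hpB⟩ <;>
      rcases hW hz' with hz' | hz' | ⟨B', -, hz', hpB'⟩
    · exact hN hz hz'
    · exact (hsN (hz' ▸ hz)).symm
    · exact absurd (hz' ▸ hz) hQN
    · exact hsN hz'
    · exact hs (congrArg Prod.fst (Sum.inl_injective hz'))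
    · cases hz'
    · exact absurd hz' hQN
    · cases hz'
    · cases hz'
      by_contra hne
      exact hBV (hT.block_unique (hs.ne hne) hpB hpB' (hsV p) (hsV p'))
  · rw [SimpleGraph.Walk.length_append, add_comm]
    exact Nat.add_le_add_left (hP2 p) _
  · exact (hW hz).imp_right (.imp_right fun ⟨B, _, h, _⟩ => ⟨B, h⟩)

end IsTransversalLift

section Assembly

variable {ν0 β0 βT κ I : Type} {adj0 : ν0 → β0 → Prop} {adjH : ν0 × κ → β0 × βT → Prop}
  {Q Q' : β0} {d : I → Connector adj0 Q Q'} {ρ : I → Equiv.Perm κ}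
  {M : ∀ a : I × κ, (bipGraph adjH).Walk (.inl ((d a.1).start.1, a.2))
    (.inl ((d a.1).finish.1, ρ a.1 a.2))}

/-- Disjoint lanes over all the connectors of a family, one for each connector and starting label;
the lanes over the connector `d i` relabel by `ρ i`. -/
structure IsLaneSystem (d : I → Connector adj0 Q Q') (ρ : I → Equiv.Perm κ)
    (M : ∀ a : I × κ, (bipGraph adjH).Walk (.inl ((d a.1).start.1, a.2))
      (.inl ((d a.1).finish.1, ρ a.1 a.2))) : Prop where
  length_le : ∀ a, (M a).length ≤ (d a.1).walk.length
  baseVertex_mem : ∀ {a z}, z ∈ (M a).support → baseVertex z ∈ (d a.1).walk.support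
  disjoint : PairwiseVertexDisjoint M

theorem IsTransversalLift.exists_isLaneSystem (hT : IsTransversalLift adj0 adjH)
    (hd : PairwiseVertexDisjoint fun i => (d i).walk)
    (hρ : ∀ i, (d i).start.1 = (d i).finish → ρ i = 1) :
    ∃ M : ∀ a : I × κ, (bipGraph adjH).Walk (.inl ((d a.1).start.1, a.2))
      (.inl ((d a.1).finish.1, ρ a.1 a.2)), IsLaneSystem d ρ M := by
  choose M hM using fun i => hT.exists_isLaneFamily (d i).walk (d i).isPath (ρ i).injective
    fun h => by rw [hρ i h, Equiv.Perm.coe_one]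
  refine ⟨fun a => M a.1 a.2, fun a => (hM a.1).length_le a.2,
    fun {a} => (hM a.1).baseVertex_mem, ?_⟩
  rintro ⟨i, l⟩ ⟨j, l'⟩ z hl hl'
  obtain rfl : i = j := hd ((hM i).baseVertex_mem hl) ((hM j).baseVertex_mem hl')
  exact congrArg (Prod.mk i) ((hM i).disjoint hl hl')

namespace IsLaneSystem

theorem eq_start_of_mem (hM : IsLaneSystem d ρ M) {a : I × κ} {p : {p // adj0 p Q}} {l : κ}
    (h : .inl (p.1, l) ∈ (M a).support) : p = (d a.1).start ∧ l = a.2 := by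
  obtain rfl : p = (d a.1).start := (d a.1).eq_start (hM.baseVertex_mem h)
  exact ⟨rfl, congrArg Prod.snd (hM.disjoint (i := (a.1, l)) (M (a.1, l)).start_mem_support h)⟩

theorem eq_finish_of_mem (hM : IsLaneSystem d ρ M) {a : I × κ} {p : {p // adj0 p Q'}} {l : κ}
    (h : .inl (p.1, l) ∈ (M a).support) : p = (d a.1).finish ∧ l = ρ a.1 a.2 := by
  obtain rfl : p = (d a.1).finish := (d a.1).eq_finish (hM.baseVertex_mem h)
  obtain ⟨l', rfl⟩ := (ρ a.1).surjective l
  have ha := congrArg Prod.snd (hM.disjoint (i := (a.1, l')) (M (a.1, l')).end_mem_support h)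
  exact ⟨rfl, congrArg (ρ a.1) ha⟩

variable {X : {p // adj0 p Q} → κ} {Y : {p // adj0 p Q'} → κ}
  {σ : {p // adj0 p Q} ≃ {p // adj0 p Q'}} {τ : Equiv.Perm {p // adj0 p Q}}
  {m : {p // adj0 p Q} → I × κ}

theorem eq_of_source_mem (hM : IsLaneSystem d ρ M)
    (hm : IsRouting (fun i => (d i).start) (fun i => X (d i).start)
      (fun i => (ρ i).symm (Y (d i).finish)) τ m)
    {p r : {p // adj0 p Q}} (h : .inl (p.1, X p) ∈ (M (m r)).support) : p = r := by
  obtain ⟨rfl, hl⟩ := hM.eq_start_of_mem h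
  exact ((hm.source_iff r).2 hl.symm).symm

theorem eq_of_target_mem (hM : IsLaneSystem d ρ M)
    (hm : IsRouting (fun i => (d i).start) (fun i => X (d i).start)
      (fun i => (ρ i).symm (Y (d i).finish)) τ m) (hσd : ∀ i, σ (d i).start = (d i).finish)
    {p r : {p // adj0 p Q}} (h : .inl ((σ (τ p)).1, Y (σ (τ p))) ∈ (M (m r)).support) :
    p = r := by
  obtain ⟨hp, hl⟩ := hM.eq_finish_of_mem h
  have hr : τ r = (d (m r).1).start :=
    (hm.target_iff r).2 ((Equiv.eq_symm_apply _).2 (hp ▸ hl.symm))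
  exact τ.injective (σ.injective (hp.trans (hr ▸ hσd _).symm))

end IsLaneSystem

variable {V V' : βT}

theorem IsTransversalLift.exists_walks_of_isRouting
    (hT : IsTransversalLift adj0 adjH) (hQQ : Q ≠ Q') (hM : IsLaneSystem d ρ M)
    {X : {p // adj0 p Q} → κ} (hX : ∀ p, adjH (p.1, X p) (Q, V))
    {Y : {p // adj0 p Q'} → κ} (hY : ∀ p, adjH (p.1, Y p) (Q', V'))
    {σ : {p // adj0 p Q} ≃ {p // adj0 p Q'}} (hσ : ∀ p, adj0 p.1 Q' → (σ p).1 = p.1)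
    (hσd : ∀ i, σ (d i).start = (d i).finish)
    {τ : Equiv.Perm {p // adj0 p Q}} (hτ : ∀ p, adjH (p.1, X p) (Q', V') → τ p = p)
    {m : {p // adj0 p Q} → I × κ}
    (hm : IsRouting (fun i => (d i).start) (fun i => X (d i).start)
      (fun i => (ρ i).symm (Y (d i).finish)) τ m) :
    ∃ W : ∀ p, (bipGraph adjH).Walk (.inl (p.1, X p)) (.inl ((σ (τ p)).1, Y (σ (τ p)))),
      PairwiseVertexDisjoint W ∧ ∀ p, (W p).length ≤ (d (m p).1).walk.length + 4 := by
  have hends {p r} (h : (p.1, X p) = ((σ (τ r)).1, Y (σ (τ r)))) : p = r := by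
    have hpQ' : adjH (p.1, X p) (Q', V') := h ▸ hY _
    have hpr : p = τ r :=
      σ.injective (Subtype.ext ((hσ p (hT.adj_of_adj hpQ')).trans (congrArg Prod.fst h)))
    exact τ.injective ((hτ p hpQ').trans hpr)
  obtain ⟨N, hN, hNlen, hNsupp⟩ := hT.exists_prepend_hops
    (s := fun p => (σ (τ p)).1) (j := fun p => Y (σ (τ p)))
    (Subtype.val_injective.comp (σ.injective.comp τ.injective)) (fun p => hY _)
    (fun p => hY (d (m p).1).finish) (fun p => by
      rw [Subtype.coe_inj, ← Equiv.eq_symm_apply (ρ _), ← hm.target_iff, ← hσd,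
        σ.apply_eq_iff_eq])
    (N := fun p => (M (m p)).reverse)
    (PairwiseVertexDisjoint.reverse fun p r z hp hr => hm.injective (hM.disjoint hp hr))
    (fun h => hM.eq_of_target_mem hm hσd (by simpa using h))
    (fun h => (d _).notMem_right (hM.baseVertex_mem (by simpa using h)))
  obtain ⟨W, hW, hWlen, -⟩ := hT.exists_prepend_hops (s := Subtype.val) (j := X)
    Subtype.val_injective hX (fun p => hX (d (m p).1).start)
    (fun p => by rw [Subtype.coe_inj, hm.source_iff]) hN.reverse
    (fun {p p'} h => by
      rcases hNsupp (by simpa using h) with h | h | ⟨b, h⟩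
      · exact hM.eq_of_source_mem hm (by simpa using h)
      · exact hends (Sum.inl_injective h)
      · cases h)
    (fun {p b} h => by
      rcases hNsupp (by simpa using h) with h | h | ⟨b, h⟩
      · exact (d _).notMem_left (hM.baseVertex_mem (by simpa using h))
      · cases h
      · exact hQQ (congrArg Prod.fst (Sum.inr_injective h)))
  refine ⟨W, hW, fun p => ?_⟩
  calc (W p).length ≤ (N p).reverse.length + 2 := hWlen p
    _ ≤ (M (m p)).reverse.length + 2 + 2 := by
      rw [SimpleGraph.Walk.length_reverse]
      exact Nat.add_le_add_right (hNlen p) 2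
    _ ≤ (d (m p).1).walk.length + 4 := by
      rw [SimpleGraph.Walk.length_reverse]
      exact Nat.add_le_add_right (hM.length_le _) 4

theorem exists_perm_apply_eq_of_ne_and_eq_one {α : Type*} {u v : α} (x y : κ) :
    ∃ ρ : Equiv.Perm κ, (u ≠ v → ρ x = y) ∧ (u = v → ρ = 1) := by
  classical
  by_cases h : u = v
  · exact ⟨1, fun h' => absurd h h', fun _ => rfl⟩
  · exact ⟨Equiv.swap x y, fun _ => Equiv.swap_apply_left x y, fun h' => absurd h' h⟩

theorem IsTransversalLift.exists_disjoint_walks (hT : IsTransversalLift adj0 adjH) (hQQ : Q ≠ Q')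
    [Finite κ] [Nontrivial κ] [Fintype {p // adj0 p Q}] [Fintype {p // adj0 p Q'}]
    (hcard : Fintype.card {p // adj0 p Q} = Fintype.card {p // adj0 p Q'})
    {c c' : Connector adj0 Q Q'} (hcc : List.Disjoint c.walk.support c'.walk.support) {L : ℕ}
    (hc : c.walk.length ≤ L) (hc' : c'.walk.length ≤ L) (V V' : βT) :
    ∃ (S T : {p // adj0 p Q} → ν0 × κ) (W : ∀ p, (bipGraph adjH).Walk (.inl (S p)) (.inl (T p))),
      (∀ p, adjH (S p) (Q, V)) ∧ (∀ p, adjH (T p) (Q', V')) ∧ PairwiseVertexDisjoint W ∧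
      ∀ p, (W p).length ≤ L + 4 := by
  cases nonempty_fintype κ
  choose X hX _ using fun p : {p // adj0 p Q} => hT.existsUnique_label V p.2
  choose Y hY _ using fun p : {p // adj0 p Q'} => hT.existsUnique_label V' p.2
  let A : Set {p // adj0 p Q} := {p | adjH (p.1, X p) (Q', V')}
  obtain ⟨d, hd, hdL, hdA⟩ :=
    Connector.exists_pair_of_disjoint hcc hc hc' (A := A) fun p hp => hT.adj_of_adj hp
  obtain ⟨σ, hσ, hσd⟩ := Connector.exists_equiv_apply_start_eq_finish hd hcard
  choose ρ hρ hρ1 using fun i => exists_perm_apply_eq_of_ne_and_eq_one (u := (d i).start.1)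
    (v := (d i).finish.1) (X (d i).start) (Y (d i).finish)
  have hA i (hi : (d i).start ∈ A) : X (d i).start = (ρ i).symm (Y (d i).finish) := by
    have h := (d i).start_eq_finish (hT.adj_of_adj hi)
    rw [hρ1 i h]
    exact hT.label_unique hi (h ▸ hY (d i).finish)
  obtain ⟨τ, m, hm, hτ⟩ := exists_isRouting (x := fun i => X (d i).start)
    (y := fun i => (ρ i).symm (Y (d i).finish)) (Connector.start_injective hd)
    (hT.card_neighbors_le Q V) hA
    (hdA.imp_left fun h i => (h i).elim (fun h => (Equiv.eq_symm_apply _).2 (hρ i h)) (hA i))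
  obtain ⟨M, hM⟩ := hT.exists_isLaneSystem hd hρ1
  obtain ⟨W, hW, hWlen⟩ := hT.exists_walks_of_isRouting hQQ hM hX hY hσ hσd hτ hm
  exact ⟨_, _, W, hX, fun p => hY _, hW, fun p =>
    (hWlen p).trans (Nat.add_le_add_right (hdL _) 4)⟩

end Assembly

theorem PairwiseInternallyDisjoint.disjoint_support_connector {ν β ι : Type} {adj : ν → β → Prop}
    {Q Q' : β} {q : ι → (bipGraph adj).Walk (.inr Q) (.inr Q')}
    (hq : PairwiseInternallyDisjoint q) {i j : ι} (hij : i ≠ j) {c c' : Connector adj Q Q'}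
    (hc : c.walk.support ⊆ (q i).support) (hc' : c'.walk.support ⊆ (q j).support) :
    List.Disjoint c.walk.support c'.walk.support := by
  refine fun z hz hz' => hij (hq.2 i j z (fun _ => ⟨?_, ?_⟩) (hc hz) (hc' hz'))
  · rintro rfl
    exact c.notMem_left hz
  · rintro rfl
    exact c.notMem_right hz

theorem twoStep_one_to_one_full_general {ν0 β0 νT βT ι : Type} [Nontrivial ι] {Δ k μ : ℕ}
    {adj0 : ν0 → β0 → Prop} {groupT : νT → Fin Δ} {adjT : νT → βT → Prop}
    {adjH : ν0 × Fin k → β0 × βT → Prop} (h2 : TwoStep Δ k adj0 groupT adjT adjH)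
    {Q Q' : β0} (hQQ : Q ≠ Q') (q : ι → (bipGraph adj0).Walk (.inr Q) (.inr Q'))
    (hq : ∀ i, (q i).IsPath ∧ (q i).length ≤ μ) (hqd : PairwiseInternallyDisjoint q)
    (V V' : βT) :
    ∃ p : Fin Δ → (bipGraph adjH).Walk (.inr (Q, V)) (.inr (Q', V')),
      (∀ i, (p i).IsPath ∧ (p i).length ≤ μ + 4) ∧ PairwiseInternallyDisjoint p := by
  obtain ⟨i, j, hij⟩ := exists_pair_ne ι
  choose c hc hcq using fun i => Connector.exists_of_isPath hQQ (q i) (hq i).1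
  obtain ⟨-, eQ, -⟩ := h2.exists_chart Q
  obtain ⟨-, eQ', -⟩ := h2.exists_chart Q'
  have : Nontrivial (Fin k) := Fin.nontrivial_iff_two_le.2 h2.td.two_le_k
  let := Fintype.ofEquiv _ eQ.symm
  let := Fintype.ofEquiv _ eQ'.symm
  have hcμ i : (c i).walk.length ≤ μ - 2 := Nat.le_sub_of_add_le ((hc i).trans (hq i).2)
  have hμ : μ - 2 + 4 + 2 = μ + 4 := by have := (hc i).trans (hq i).2; omega
  obtain ⟨S, T, W, hS, hT, hW, hWlen⟩ := h2.isTransversalLift.exists_disjoint_walks hQQ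
    (Fintype.card_congr (eQ.trans eQ'.symm))
    (hqd.disjoint_support_connector hij (hcq i) (hcq j)) (hcμ i) (hcμ j) V V'
  obtain ⟨p, hp, hpd⟩ := PairwiseVertexDisjoint.exists_pairwiseInternallyDisjoint
    (p := fun l => W (eQ.symm l)) (fun _ _ _ hl hl' => eQ.symm.injective (hW hl hl'))
    (fun l => hWlen _) (fun l => bipGraph_adj_inr_inl_s8.2 (hS _))
    (fun l => bipGraph_adj_inl_inr_s8.2 (hT _))
  exact ⟨p, hμ ▸ hp, hpd⟩

/-- Let `k, Δ, d ≥ 2` and let `H` (given by `adjH`) be built by the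
2-step method from the connected `(d,Δ)`-bipartite graph `H0` using the
`[Δ,k]`-transversal design `T`.  Let `Q` and `Q'` be distinct blocks of `H0` joined
by `lam ≥ 2` pairwise internally-disjoint paths, each of length at most `μ`.  Then
for any blocks `(Q, V) ∈ B_Q` and `(Q', V') ∈ B_{Q'}` of `H` there are `Δ` pairwise
internally-disjoint paths in `H` from `(Q, V)` to `(Q', V')`, each of length at
most `μ + 4`. -/
theorem twoStep_one_to_one_full {ν0 β0 νT βT : Type} (d Δ k lam μ : ℕ)
    (hd : 2 ≤ d) (hΔ : 2 ≤ Δ) (hk : 2 ≤ k)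
    (adj0 : ν0 → β0 → Prop) (groupT : νT → Fin Δ) (adjT : νT → βT → Prop)
    (adjH : ν0 × Fin k → β0 × βT → Prop)
    (hH0 : IsBipartiteDegRank d Δ adj0)
    (hconn : (bipGraph adj0).Connected)
    (h2 : TwoStep Δ k adj0 groupT adjT adjH)
    (Q Q' : β0) (hQQ : Q ≠ Q') (hlam : 2 ≤ lam)
    (q : Fin lam → (bipGraph adj0).Walk (Sum.inr Q) (Sum.inr Q'))
    (hq : ∀ i : Fin lam, (q i).IsPath ∧ (q i).length ≤ μ)
    (hqd : PairwiseInternallyDisjoint q)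
    (V V' : βT) :
    ∃ p : Fin Δ → (bipGraph adjH).Walk (Sum.inr (Q, V)) (Sum.inr (Q', V')),
      (∀ i, (p i).IsPath ∧ (p i).length ≤ μ + 4) ∧
      PairwiseInternallyDisjoint p := by
  have : Nontrivial (Fin lam) := Fin.nontrivial_iff_two_le.2 hlam
  exact twoStep_one_to_one_full_general h2 hQQ q hq hqd V V'
end
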